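/- (Characterization of maximal ST-pairs of M_{n,n}) Let n ≥ 3 and let (S, T) be a maximal ST-pair of M_{n,n}. Then (S, T) has one of the following five forms: (1) T-chain: T is a chain contained in M_{n,n}* and S = M_{n,n}* ∖ T (explicitly, T is one of {aᵢ}, {bᵢ}, {aᵢ, b₁}, {aₙ, bᵢ}); (2) S-link: S = {b₁} and T = {a₁,…,aₙ, bᵢ} for some i ≠ 1, or S = {aₙ} and T = {aᵢ, b₁,…,bₙ} for some i ≠ n; (3) S-2-links: S = {aₙ, b₁} and T = {aᵢ, bⱼ} with i ≠ n and j ≠ 1; (4) S-level: S = {b₁,…,bₙ} and T = {aᵢ, aₙ} with i ≠ n, or S = {a₁,…,aₙ} and T = {b₁, bᵢ} with i ≠ 1; (5) S-level-minus-link: S = {b₂,…,bₙ} and T = {aᵢ, aₙ, b₁} with i ≠ n, or S = {a₁,…,a_{n−1}} and T = {aₙ, b₁, bᵢ} with i ≠ 1. -/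

import Mathlib

/-- The underlying set of the lattice `M_{n,n}`: a bottom element `0`, a top
element `1`, and two levels `a₁, …, aₙ` and `b₁, …, bₙ`.  Here `a i` (for
`i : Fin n`) stands for `a_{i+1}` and `b j` for `b_{j+1}`, so the link elements
are `aₙ = a ⟨n-1, _⟩` and `b₁ = b ⟨0, _⟩`. -/
inductive Mnn (n : ℕ) : Type where
  | bot : Mnn n
  | top : Mnn n
  | a : Fin n → Mnn n
  | b : Fin n → Mnn n
deriving DecidableEq

namespace Mnn

/-- The order of `M_{n,n}`: `0` is least, `1` is greatest, `aᵢ ≤ b₁` for every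
`i`, `aₙ ≤ bⱼ` for every `j`, and there are no other comparabilities besides
those forced by reflexivity. -/
def le {n : ℕ} : Mnn n → Mnn n → Prop
  | .bot, _ => True
  | .top, .top => True
  | .top, .bot => False
  | .top, .a _ => False
  | .top, .b _ => False
  | .a _, .top => True
  | .a _, .bot => False
  | .a i, .a j => i = j
  | .a i, .b j => (j : ℕ) = 0 ∨ (i : ℕ) = n - 1
  | .b _, .top => True
  | .b _, .bot => False
  | .b _, .a _ => False
  | .b i, .b j => i = j

/-- The join operation of `M_{n,n}`. -/
def sup {n : ℕ} : Mnn n → Mnn n → Mnn n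
  | .bot, x => x
  | .top, _ => .top
  | .a i, .bot => .a i
  | .a _, .top => .top
  | .a i, .a j => if i = j then .a i else .b ⟨0, Nat.lt_of_le_of_lt (Nat.zero_le _) i.isLt⟩
  | .a i, .b j => if (j : ℕ) = 0 ∨ (i : ℕ) = n - 1 then .b j else .top
  | .b i, .bot => .b i
  | .b _, .top => .top
  | .b i, .a j => if (i : ℕ) = 0 ∨ (j : ℕ) = n - 1 then .b i else .top
  | .b i, .b j => if i = j then .b i else .top

/-- The meet operation of `M_{n,n}`. -/
def inf {n : ℕ} : Mnn n → Mnn n → Mnn n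
  | .bot, _ => .bot
  | .top, x => x
  | .a _, .bot => .bot
  | .a i, .top => .a i
  | .a i, .a j => if i = j then .a i else .bot
  | .a i, .b j => if (j : ℕ) = 0 ∨ (i : ℕ) = n - 1 then .a i else .bot
  | .b _, .bot => .bot
  | .b i, .top => .b i
  | .b i, .a j => if (i : ℕ) = 0 ∨ (j : ℕ) = n - 1 then .a j else .bot
  | .b i, .b j => if i = j then .b i
      else .a ⟨n - 1, Nat.sub_lt (Nat.lt_of_le_of_lt (Nat.zero_le _) i.isLt) Nat.one_pos⟩

theorem le_refl' {n : ℕ} (x : Mnn n) : le x x := by cases x <;> simp [le]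

theorem le_trans' {n : ℕ} (x y z : Mnn n) (hxy : le x y) (hyz : le y z) : le x z := by
  cases x <;> cases y <;> cases z <;> simp_all [le] <;> omega

theorem le_antisymm' {n : ℕ} (x y : Mnn n) (hxy : le x y) (hyx : le y x) : x = y := by
  cases x <;> cases y <;> simp_all [le]

theorem le_sup_left' {n : ℕ} (x y : Mnn n) : le x (sup x y) := by
  cases x <;> cases y <;> dsimp only [sup] <;> (try split_ifs) <;> simp_all [le]

theorem le_sup_right' {n : ℕ} (x y : Mnn n) : le y (sup x y) := by
  cases x <;> cases y <;> dsimp only [sup] <;> (try split_ifs) <;> simp_all [le]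

theorem sup_le' {n : ℕ} (x y z : Mnn n) (hxz : le x z) (hyz : le y z) :
    le (sup x y) z := by
  cases x <;> cases y <;> cases z <;> dsimp only [sup] <;> (try split_ifs) <;>
    simp_all [le, Fin.ext_iff] <;> omega

theorem inf_le_left' {n : ℕ} (x y : Mnn n) : le (inf x y) x := by
  cases x <;> cases y <;> dsimp only [inf] <;> (try split_ifs) <;> simp_all [le]

theorem inf_le_right' {n : ℕ} (x y : Mnn n) : le (inf x y) y := by
  cases x <;> cases y <;> dsimp only [inf] <;> (try split_ifs) <;> simp_all [le]

theorem le_inf' {n : ℕ} (x y z : Mnn n) (hxy : le x y) (hxz : le x z) :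
    le x (inf y z) := by
  cases x <;> cases y <;> cases z <;> dsimp only [inf] <;> (try split_ifs) <;>
    simp_all [le, Fin.ext_iff] <;> omega

/-- `M_{n,n}` is a lattice. -/
instance instLattice (n : ℕ) : Lattice (Mnn n) where
  le := le
  sup := sup
  inf := inf
  le_refl := le_refl'
  le_trans := le_trans'
  le_antisymm := le_antisymm'
  le_sup_left := le_sup_left'
  le_sup_right := le_sup_right'
  sup_le := sup_le'
  inf_le_left := inf_le_left'
  inf_le_right := inf_le_right'
  le_inf := le_inf'

/-- `M_{n,n}* = M_{n,n} ∖ {0, 1}`, the set of non-identity elements. -/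
def star (n : ℕ) : Set (Mnn n) := {x | x ≠ .bot ∧ x ≠ .top}

/-- The level `{a₁, …, aₙ}` of `M_{n,n}`. -/
def aLevel (n : ℕ) : Set (Mnn n) := Set.range Mnn.a

/-- The level `{b₁, …, bₙ}` of `M_{n,n}`. -/
def bLevel (n : ℕ) : Set (Mnn n) := Set.range Mnn.b

/-- The link element `aₙ` of the level `{a₁, …, aₙ}`. -/
def aLink (n : ℕ) (h : 0 < n) : Mnn n := .a ⟨n - 1, Nat.sub_lt h Nat.one_pos⟩

/-- The link element `b₁` of the level `{b₁, …, bₙ}`. -/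
def bLink (n : ℕ) (h : 0 < n) : Mnn n := .b ⟨0, h⟩

end Mnn

/-- `L` is `ST`-meet distributive. -/
def IsSTMeetDistrib {α : Type*} [Lattice α] (S T : Set α) : Prop :=
  ∀ s ∈ S, ∀ t₁ ∈ T, ∀ t₂ ∈ T, s ⊓ (t₁ ⊔ t₂) = (s ⊓ t₁) ⊔ (s ⊓ t₂)

/-- `L` is `ST`-join distributive. -/
def IsSTJoinDistrib {α : Type*} [Lattice α] (S T : Set α) : Prop :=
  ∀ s ∈ S, ∀ t₁ ∈ T, ∀ t₂ ∈ T, s ⊔ (t₁ ⊓ t₂) = (s ⊔ t₁) ⊓ (s ⊔ t₂)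

/-- `L` is `ST`-distributive. -/
def IsSTDistrib {α : Type*} [Lattice α] (S T : Set α) : Prop :=
  IsSTMeetDistrib S T ∧ IsSTJoinDistrib S T

/-- `(S, T)` is a maximal `ST`-pair of `M_{n,n}` (subject to the conditions of
the search problem: `S, T ⊆ M_{n,n}*`, `S ∩ T = ∅`, `S ≠ ∅`, `T ≠ ∅`). -/
def MaximalSTPair (n : ℕ) (S T : Set (Mnn n)) : Prop :=
  S ⊆ Mnn.star n ∧ T ⊆ Mnn.star n ∧ S ∩ T = ∅ ∧ S.Nonempty ∧ T.Nonempty ∧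
  IsSTDistrib S T ∧
  (¬ ∃ S' : Set (Mnn n), S ⊂ S' ∧ S' ⊆ Mnn.star n ∧ S' ∩ T = ∅ ∧ IsSTDistrib S' T) ∧
  (¬ ∃ T' : Set (Mnn n), T ⊂ T' ∧ T' ⊆ Mnn.star n ∧ S ∩ T' = ∅ ∧ IsSTDistrib S T')

/-- Type 1 (T-chain): `T` is a chain contained in `M_{n,n}*` — explicitly one
of `{aᵢ}`, `{bᵢ}`, `{aᵢ, b₁}`, `{aₙ, bᵢ}` — and `S = M_{n,n}* ∖ T`. -/
def TypeTChain (n : ℕ) (h : 0 < n) (S T : Set (Mnn n)) : Prop :=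
  IsChain (· ≤ ·) T ∧ S = Mnn.star n \ T ∧
  ∃ i : Fin n, T = {Mnn.a i} ∨ T = {Mnn.b i} ∨
    T = {Mnn.a i, Mnn.bLink n h} ∨ T = {Mnn.aLink n h, Mnn.b i}

/-- Type 2 (S-link): `S = {b₁}` and `T = {a₁, …, aₙ, bᵢ}` with `i ≠ 1`, or
`S = {aₙ}` and `T = {aᵢ, b₁, …, bₙ}` with `i ≠ n`. -/
def TypeSLink (n : ℕ) (h : 0 < n) (S T : Set (Mnn n)) : Prop :=
  (∃ i : Fin n, Mnn.b i ≠ Mnn.bLink n h ∧ S = {Mnn.bLink n h} ∧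
    T = Mnn.aLevel n ∪ {Mnn.b i}) ∨
  (∃ i : Fin n, Mnn.a i ≠ Mnn.aLink n h ∧ S = {Mnn.aLink n h} ∧
    T = {Mnn.a i} ∪ Mnn.bLevel n)

/-- Type 3 (S-2-links): `S = {aₙ, b₁}` and `T = {aᵢ, bⱼ}` with `i ≠ n`,
`j ≠ 1`. -/
def TypeS2Links (n : ℕ) (h : 0 < n) (S T : Set (Mnn n)) : Prop :=
  ∃ i j : Fin n, Mnn.a i ≠ Mnn.aLink n h ∧ Mnn.b j ≠ Mnn.bLink n h ∧
    S = {Mnn.aLink n h, Mnn.bLink n h} ∧ T = {Mnn.a i, Mnn.b j}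

/-- Type 4 (S-level): `S = {b₁, …, bₙ}` and `T = {aᵢ, aₙ}` with `i ≠ n`, or
`S = {a₁, …, aₙ}` and `T = {b₁, bᵢ}` with `i ≠ 1`. -/
def TypeSLevel (n : ℕ) (h : 0 < n) (S T : Set (Mnn n)) : Prop :=
  (∃ i : Fin n, Mnn.a i ≠ Mnn.aLink n h ∧ S = Mnn.bLevel n ∧
    T = {Mnn.a i, Mnn.aLink n h}) ∨
  (∃ i : Fin n, Mnn.b i ≠ Mnn.bLink n h ∧ S = Mnn.aLevel n ∧
    T = {Mnn.bLink n h, Mnn.b i})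

/-- Type 5 (S-level-minus-link): `S = {b₂, …, bₙ}` and `T = {aᵢ, aₙ, b₁}` with
`i ≠ n`, or `S = {a₁, …, a_{n-1}}` and `T = {aₙ, b₁, bᵢ}` with `i ≠ 1`. -/
def TypeSLevelMinusLink (n : ℕ) (h : 0 < n) (S T : Set (Mnn n)) : Prop :=
  (∃ i : Fin n, Mnn.a i ≠ Mnn.aLink n h ∧ S = Mnn.bLevel n \ {Mnn.bLink n h} ∧
    T = {Mnn.a i, Mnn.aLink n h, Mnn.bLink n h}) ∨
  (∃ i : Fin n, Mnn.b i ≠ Mnn.bLink n h ∧ S = Mnn.aLevel n \ {Mnn.aLink n h} ∧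
    T = {Mnn.aLink n h, Mnn.bLink n h, Mnn.b i})

/-!
`M_{n,n}` is modular, so `s` distributes over `t₁`, `t₂` as soon as two of the three elements are
comparable. Conversely, the join of two incomparable elements lies above the whole `a`-level and
their meet lies below the whole `b`-level; as every `aᵢ` is an atom and every `bᵢ` a coatom, no
element distributes over a pair with which it forms a three-element antichain. Hence `M_{n,n}` is
`ST`-distributive iff no `s ∈ S` and `t₁, t₂ ∈ T` form such an antichain.

If `T` is a chain, this condition is empty and `S` is the complement of `T`. Otherwise, either `S`
consists of links, or `S` contains a non-link element. The only element of `M_{n,n}*` comparable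
with a non-link `aᵢ` is `b₁`, so an incomparable pair in `T` must then be `{b₁, bₖ}`, which
determines `T` up to the element `aₙ`, and with it `S`. An order-reversing involution reduces the
case of a non-link `bᵢ` to this one.
-/

/-- `Comparable x y`: the elements `x` and `y` of an ordered type satisfy `x ≤ y` or `y ≤ x`. -/
local notation "Comparable" => Relation.SymmGen (· ≤ ·)

section Lattice

variable {α : Type*} [Lattice α] {s t₁ t₂ : α}

/-- `s` distributes over the pair `t₁`, `t₂`: the instance at `(s, t₁, t₂)` of both distributive
laws. A lattice is `ST`-distributive when every `s ∈ S` distributes over all pairs from `T`. -/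
def DistributesOver (s t₁ t₂ : α) : Prop :=
  s ⊓ (t₁ ⊔ t₂) = s ⊓ t₁ ⊔ s ⊓ t₂ ∧ s ⊔ t₁ ⊓ t₂ = (s ⊔ t₁) ⊓ (s ⊔ t₂)

theorem isSTDistrib_iff_distributesOver {S T : Set α} :
    IsSTDistrib S T ↔ ∀ s ∈ S, ∀ t₁ ∈ T, ∀ t₂ ∈ T, DistributesOver s t₁ t₂ := by
  simp only [IsSTDistrib, IsSTMeetDistrib, IsSTJoinDistrib, DistributesOver, forall_and]

namespace DistributesOver

theorem symm (h : DistributesOver s t₁ t₂) : DistributesOver s t₂ t₁ := by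
  simpa only [DistributesOver, sup_comm, inf_comm] using h

theorem toDual (h : DistributesOver s t₁ t₂) :
    DistributesOver (OrderDual.toDual s) (OrderDual.toDual t₁) (OrderDual.toDual t₂) :=
  ⟨h.2, h.1⟩

theorem of_le (h : t₁ ≤ t₂) : DistributesOver s t₁ t₂ := by
  constructor
  · rw [sup_eq_right.2 h, sup_eq_right.2 (inf_le_inf_left s h)]
  · rw [inf_eq_left.2 h, inf_eq_left.2 (sup_le_sup_left h s)]

theorem of_left_le [IsModularLattice α] (h : s ≤ t₁) : DistributesOver s t₁ t₂ := by
  constructor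
  · rw [inf_eq_left.2 (h.trans le_sup_left), inf_eq_left.2 h, sup_inf_self]
  · rw [sup_eq_right.2 h, inf_comm t₁, inf_comm t₁, sup_inf_assoc_of_le t₂ h]

theorem of_le_left [IsModularLattice α] (h : t₁ ≤ s) : DistributesOver s t₁ t₂ :=
  (of_left_le (s := OrderDual.toDual s) (t₂ := OrderDual.toDual t₂) h).toDual

theorem of_symmGen [IsModularLattice α] (h : Comparable s t₁ ∨ Comparable s t₂ ∨ Comparable t₁ t₂) :
    DistributesOver s t₁ t₂ := by
  rcases h with (h | h) | (h | h) | (h | h)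
  exacts [of_left_le h, of_le_left h, (of_left_le h).symm, (of_le_left h).symm, of_le h,
    (of_le h).symm]

theorem le_or_le_of_isAtom [OrderBot α] (h : DistributesOver s t₁ t₂) (hs : IsAtom s)
    (hle : s ≤ t₁ ⊔ t₂) : s ≤ t₁ ∨ s ≤ t₂ := by
  by_contra! hnot
  refine hs.ne_bot ?_
  calc s = s ⊓ (t₁ ⊔ t₂) := (inf_eq_left.2 hle).symm
    _ = s ⊓ t₁ ⊔ s ⊓ t₂ := h.1
    _ = ⊥ := by
      rw [(hs.not_le_iff_disjoint.1 hnot.1).eq_bot, (hs.not_le_iff_disjoint.1 hnot.2).eq_bot,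
        sup_bot_eq]

theorem le_or_le_of_isCoatom [OrderTop α] (h : DistributesOver s t₁ t₂) (hs : IsCoatom s)
    (hle : t₁ ⊓ t₂ ≤ s) : t₁ ≤ s ∨ t₂ ≤ s :=
  h.toDual.le_or_le_of_isAtom hs.dual hle

end DistributesOver

end Lattice

namespace Mnn

variable {n : ℕ} {i j : Fin n} {x y : Mnn n} {S T : Set (Mnn n)}

instance : BoundedOrder (Mnn n) where
  bot := bot
  bot_le _ := trivial
  top := top
  le_top x := by cases x <;> trivial

instance : IsModularLattice (Mnn n) where
  sup_inf_le_assoc_of_le {x} y {z} hxz := by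
    change le (inf (sup x y) z) (sup x (inf y z))
    change le x z at hxz
    cases x <;> cases y <;> cases z <;> simp only [sup, inf, le] at hxz ⊢ <;> grind [le, sup, inf]

variable {hn : 0 < n}

theorem star_eq_union : star n = aLevel n ∪ bLevel n := by
  ext x
  cases x <;> simp [star, aLevel, bLevel]

theorem a_mem_star : a i ∈ star n := star_eq_union ▸ .inl ⟨i, rfl⟩

theorem b_mem_star : b i ∈ star n := star_eq_union ▸ .inr ⟨i, rfl⟩

theorem a_eq_aLink_iff : a i = aLink n hn ↔ (i : ℕ) = n - 1 := by
  simp [aLink, Fin.ext_iff]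

theorem b_eq_bLink_iff : b i = bLink n hn ↔ (i : ℕ) = 0 := by
  simp [bLink, Fin.ext_iff]

theorem a_le_a_iff : a i ≤ a j ↔ i = j := Iff.rfl

theorem b_le_b_iff : b i ≤ b j ↔ i = j := Iff.rfl

theorem not_b_le_a : ¬ b i ≤ a j := id

theorem a_le_b_iff : a i ≤ b j ↔ a i = aLink n hn ∨ b j = bLink n hn := by
  rw [a_eq_aLink_iff, b_eq_bLink_iff, or_comm]
  rfl

theorem isAtom_a : IsAtom (a i) := by
  refine ⟨nofun, ?_⟩
  rintro (_ | _ | j | j) hlt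
  · rfl
  · exact (hlt.not_ge le_top).elim
  · exact (hlt.ne (congrArg a (a_le_a_iff.1 hlt.le))).elim
  · exact (not_b_le_a hlt.le).elim

theorem isCoatom_b : IsCoatom (b i) := by
  refine ⟨nofun, ?_⟩
  rintro (_ | _ | j | j) hlt
  · exact (hlt.not_ge bot_le).elim
  · rfl
  · exact (not_b_le_a hlt.le).elim
  · exact (hlt.ne (congrArg b (b_le_b_iff.1 hlt.le))).elim

theorem a_le_sup_of_not_symmGen (h : ¬ Comparable x y) : a i ≤ x ⊔ y := by
  change ¬ (le x y ∨ le y x) at h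
  change le (a i) (sup x y)
  cases x <;> cases y <;> grind [le, sup]

theorem inf_le_b_of_not_symmGen (h : ¬ Comparable x y) : x ⊓ y ≤ b i := by
  change ¬ (le x y ∨ le y x) at h
  change le (inf x y) (b i)
  cases x <;> cases y <;> grind [le, inf]

theorem distributesOver_iff {s t₁ t₂ : Mnn n} :
    DistributesOver s t₁ t₂ ↔ Comparable s t₁ ∨ Comparable s t₂ ∨ Comparable t₁ t₂ := by
  refine ⟨fun h => ?_, .of_symmGen⟩
  by_contra! hincomp
  obtain ⟨h₁, h₂, h₁₂⟩ := hincomp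
  cases s with
  | bot => exact h₁ (.inl bot_le)
  | top => exact h₁ (.inr le_top)
  | a i =>
    rcases h.le_or_le_of_isAtom isAtom_a (a_le_sup_of_not_symmGen h₁₂) with hle | hle
    exacts [h₁ (.inl hle), h₂ (.inl hle)]
  | b i =>
    rcases h.le_or_le_of_isCoatom isCoatom_b (inf_le_b_of_not_symmGen h₁₂) with hle | hle
    exacts [h₁ (.inr hle), h₂ (.inr hle)]

theorem isSTDistrib_iff_symmGen :
    IsSTDistrib S T ↔
      ∀ s ∈ S, ∀ t₁ ∈ T, ∀ t₂ ∈ T, Comparable s t₁ ∨ Comparable s t₂ ∨ Comparable t₁ t₂ := by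
  simp only [isSTDistrib_iff_distributesOver, distributesOver_iff]

theorem a_symmGen_a_iff : Comparable (a i) (a j) ↔ i = j := by
  simp only [Relation.SymmGen, a_le_a_iff, eq_comm, or_self]

theorem b_symmGen_b_iff : Comparable (b i) (b j) ↔ i = j := by
  simp only [Relation.SymmGen, b_le_b_iff, eq_comm, or_self]

theorem a_symmGen_b_iff : Comparable (a i) (b j) ↔ a i = aLink n hn ∨ b j = bLink n hn := by
  simp only [Relation.SymmGen, a_le_b_iff (hn := hn), not_b_le_a, or_false]

theorem a_le_bLink : a i ≤ bLink n hn := (a_le_b_iff (hn := hn)).2 (.inr rfl)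

theorem aLink_le_b : aLink n hn ≤ b i := (a_le_b_iff (hn := hn)).2 (.inl rfl)

theorem eq_bLink_of_a_symmGen (hi : a i ≠ aLink n hn) (hx : x ∈ star n) (hne : x ≠ a i)
    (h : Comparable (a i) x) : x = bLink n hn := by
  rcases star_eq_union ▸ hx with ⟨j, rfl⟩ | ⟨j, rfl⟩
  · exact absurd (congrArg a (a_symmGen_a_iff.1 h).symm) hne
  · exact (a_symmGen_b_iff.1 h).resolve_left hi

theorem eq_aLink_of_b_symmGen (hi : b i ≠ bLink n hn) (hx : x ∈ star n) (hne : x ≠ b i)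
    (h : Comparable (b i) x) : x = aLink n hn := by
  rcases star_eq_union ▸ hx with ⟨j, rfl⟩ | ⟨j, rfl⟩
  · exact (a_symmGen_b_iff.1 h.symm).resolve_right hi
  · exact absurd (congrArg b (b_symmGen_b_iff.1 h).symm) hne

theorem isAntichain_aLevel : IsAntichain (· ≤ ·) (aLevel n) := by
  rintro _ ⟨i, rfl⟩ _ ⟨j, rfl⟩ hne hle
  exact hne (congrArg a (a_le_a_iff.1 hle))

theorem isAntichain_bLevel : IsAntichain (· ≤ ·) (bLevel n) := by
  rintro _ ⟨i, rfl⟩ _ ⟨j, rfl⟩ hne hle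
  exact hne (congrArg b (b_le_b_iff.1 hle))

theorem eq_singleton_or_eq_pair (hT : T ⊆ star n) (hne : T.Nonempty)
    (ha : (T ∩ aLevel n).Subsingleton) (hb : (T ∩ bLevel n).Subsingleton) :
    (∃ i, T = {a i}) ∨ (∃ j, T = {b j}) ∨ ∃ i j, T = {a i, b j} := by
  have hunion : T ∩ aLevel n ∪ T ∩ bLevel n = T := by
    rw [← Set.inter_union_distrib_left, ← star_eq_union, Set.inter_eq_left.2 hT]
  rcases ha.eq_empty_or_singleton with ha | ⟨x, ha⟩ <;>
    rcases hb.eq_empty_or_singleton with hb | ⟨y, hb⟩ <;> rw [ha, hb] at hunion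
  · simp [← hunion] at hne
  · obtain ⟨j, rfl⟩ : y ∈ bLevel n := (hb.ge rfl).2
    exact .inr (.inl ⟨j, by rw [← hunion, Set.empty_union]⟩)
  · obtain ⟨i, rfl⟩ : x ∈ aLevel n := (ha.ge rfl).2
    exact .inl ⟨i, by rw [← hunion, Set.union_empty]⟩
  · obtain ⟨i, rfl⟩ : x ∈ aLevel n := (ha.ge rfl).2
    obtain ⟨j, rfl⟩ : y ∈ bLevel n := (hb.ge rfl).2
    exact .inr (.inr ⟨i, j, hunion.symm⟩)

theorem eq_singleton_or_eq_pair_of_isChain (hT : T ⊆ star n) (hne : T.Nonempty)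
    (hc : IsChain (· ≤ ·) T) :
    ∃ i : Fin n, T = {a i} ∨ T = {b i} ∨ T = {a i, bLink n hn} ∨ T = {aLink n hn, b i} := by
  have ha : (T ∩ aLevel n).Subsingleton := subsingleton_of_isChain_of_isAntichain
    (hc.mono Set.inter_subset_left) (isAntichain_aLevel.subset Set.inter_subset_right)
  have hb : (T ∩ bLevel n).Subsingleton := subsingleton_of_isChain_of_isAntichain
    (hc.mono Set.inter_subset_left) (isAntichain_bLevel.subset Set.inter_subset_right)
  rcases eq_singleton_or_eq_pair hT hne ha hb with ⟨i, rfl⟩ | ⟨j, rfl⟩ | ⟨i, j, rfl⟩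
  · exact ⟨i, .inl rfl⟩
  · exact ⟨j, .inr (.inl rfl)⟩
  · rcases a_symmGen_b_iff (hn := hn).1 (hc.total (.inl rfl) (.inr rfl)) with hlink | hlink
    · exact ⟨j, .inr (.inr (.inr (by rw [hlink])))⟩
    · exact ⟨i, .inr (.inr (.inl (by rw [hlink])))⟩

/-- The order-reversing involution of `M_{n,n}`, exchanging `aᵢ` with `b_{n+1-i}` and so the two
levels and the two link elements. -/
def dual : Mnn n → Mnn n
  | bot => top
  | top => bot
  | a i => b i.rev
  | b i => a i.rev

theorem dual_involutive : Function.Involutive (dual : Mnn n → Mnn n) := by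
  rintro (_ | _ | i | i) <;> simp [dual]

theorem dual_le_dual_iff : dual x ≤ dual y ↔ y ≤ x := by
  change le _ _ ↔ le _ _
  cases x <;> cases y <;> simp only [dual, le, Fin.rev_inj, Fin.val_rev] <;> grind

theorem dual_symmGen_dual_iff : Comparable (dual x) (dual y) ↔ Comparable x y := by
  simp only [Relation.SymmGen, dual_le_dual_iff, or_comm]

theorem dual_aLink : dual (aLink n hn) = bLink n hn :=
  b_eq_bLink_iff.2 (by simp only [Fin.val_rev]; omega)

theorem dual_bLink : dual (bLink n hn) = aLink n hn := by
  rw [← dual_aLink, dual_involutive]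

theorem image_dual_image_dual (U : Set (Mnn n)) : dual '' (dual '' U) = U := by
  rw [← Set.image_comp, dual_involutive.comp_self, Set.image_id]

theorem image_dual_aLevel : dual '' aLevel n = bLevel n := by
  rw [aLevel, bLevel, ← Set.range_comp]
  exact Fin.rev_surjective.range_comp b

theorem image_dual_bLevel : dual '' bLevel n = aLevel n := by
  rw [← image_dual_aLevel, image_dual_image_dual]

theorem image_dual_star : dual '' star n = star n := by
  rw [star_eq_union, Set.image_union, image_dual_aLevel, image_dual_bLevel, Set.union_comm]

theorem isChain_image_dual_iff : IsChain (· ≤ ·) (dual '' T) ↔ IsChain (· ≤ ·) T := by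
  simp only [IsChain, Set.Pairwise, Set.forall_mem_image, dual_involutive.injective.ne_iff,
    dual_le_dual_iff, or_comm]

end Mnn

section

open Mnn hiding star

variable {n : ℕ} {hn : 0 < n} {i k : Fin n} {S T : Set (Mnn n)}

theorem IsSTDistrib.image_dual (h : IsSTDistrib S T) :
    IsSTDistrib (dual '' S) (dual '' T) := by
  simpa only [isSTDistrib_iff_symmGen, Set.forall_mem_image, dual_symmGen_dual_iff] using h

theorem TypeSLink.image_dual (h : TypeSLink n hn S T) :
    TypeSLink n hn (dual '' S) (dual '' T) := by
  rcases h with ⟨i, hi, rfl, rfl⟩ | ⟨i, hi, rfl, rfl⟩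
  · refine .inr ⟨i.rev, ?_, ?_, ?_⟩
    · exact fun h => hi (dual_involutive.injective (h.trans dual_bLink.symm))
    · rw [Set.image_singleton, dual_bLink]
    · rw [Set.image_union, image_dual_aLevel, Set.image_singleton, Set.union_comm, dual]
  · refine .inl ⟨i.rev, ?_, ?_, ?_⟩
    · exact fun h => hi (dual_involutive.injective (h.trans dual_aLink.symm))
    · rw [Set.image_singleton, dual_aLink]
    · rw [Set.image_union, image_dual_bLevel, Set.image_singleton, Set.union_comm, dual]

theorem TypeSLevel.image_dual (h : TypeSLevel n hn S T) :
    TypeSLevel n hn (dual '' S) (dual '' T) := by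
  rcases h with ⟨i, hi, rfl, rfl⟩ | ⟨i, hi, rfl, rfl⟩
  · refine .inr ⟨i.rev, ?_, image_dual_bLevel, ?_⟩
    · exact fun h => hi (dual_involutive.injective (h.trans dual_aLink.symm))
    · rw [Set.image_pair, dual_aLink, Set.pair_comm, dual]
  · refine .inl ⟨i.rev, ?_, image_dual_aLevel, ?_⟩
    · exact fun h => hi (dual_involutive.injective (h.trans dual_bLink.symm))
    · rw [Set.image_pair, dual_bLink, Set.pair_comm, dual]

theorem TypeSLevelMinusLink.image_dual (h : TypeSLevelMinusLink n hn S T) :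
    TypeSLevelMinusLink n hn (dual '' S) (dual '' T) := by
  rcases h with ⟨i, hi, rfl, rfl⟩ | ⟨i, hi, rfl, rfl⟩
  · refine .inr ⟨i.rev, ?_, ?_, ?_⟩
    · exact fun h => hi (dual_involutive.injective (h.trans dual_aLink.symm))
    · rw [Set.image_sdiff dual_involutive.injective, image_dual_bLevel, Set.image_singleton,
        dual_bLink]
    · rw [Set.image_insert_eq, Set.image_pair, dual_aLink, dual_bLink, Set.insert_comm,
        Set.pair_comm, dual, Set.insert_comm]
  · refine .inl ⟨i.rev, ?_, ?_, ?_⟩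
    · exact fun h => hi (dual_involutive.injective (h.trans dual_bLink.symm))
    · rw [Set.image_sdiff dual_involutive.injective, image_dual_aLevel, Set.image_singleton,
        dual_aLink]
    · rw [Set.image_insert_eq, Set.image_pair, dual_aLink, dual_bLink, Set.insert_comm,
        Set.pair_comm, dual, Set.insert_comm]

namespace MaximalSTPair

theorem image_dual (h : MaximalSTPair n S T) : MaximalSTPair n (dual '' S) (dual '' T) := by
  obtain ⟨hS, hT, hST, hSne, hTne, hd, hSmax, hTmax⟩ := h
  have hinj : Function.Injective (dual : Mnn n → Mnn n) := dual_involutive.injective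
  refine ⟨image_dual_star ▸ Set.image_mono hS, image_dual_star ▸ Set.image_mono hT,
    by rw [← Set.image_inter hinj, hST, Set.image_empty], hSne.image _, hTne.image _,
    hd.image_dual, ?_, ?_⟩
  · rintro ⟨S', hlt, hS', hdisj, hd'⟩
    refine hSmax ⟨dual '' S', ?_, image_dual_star ▸ Set.image_mono hS', ?_, ?_⟩
    · simpa only [image_dual_image_dual] using hinj.image_strictMono hlt
    · simpa only [Set.image_inter hinj, image_dual_image_dual, Set.image_empty]
        using congrArg (dual '' ·) hdisj
    · simpa only [image_dual_image_dual] using hd'.image_dual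
  · rintro ⟨T', hlt, hT', hdisj, hd'⟩
    refine hTmax ⟨dual '' T', ?_, image_dual_star ▸ Set.image_mono hT', ?_, ?_⟩
    · simpa only [image_dual_image_dual] using hinj.image_strictMono hlt
    · simpa only [Set.image_inter hinj, image_dual_image_dual, Set.image_empty]
        using congrArg (dual '' ·) hdisj
    · simpa only [image_dual_image_dual] using hd'.image_dual

theorem subset_star_left (h : MaximalSTPair n S T) : S ⊆ Mnn.star n := h.1

theorem subset_star_right (h : MaximalSTPair n S T) : T ⊆ Mnn.star n := h.2.1

theorem nonempty_left (h : MaximalSTPair n S T) : S.Nonempty := h.2.2.2.1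

theorem nonempty_right (h : MaximalSTPair n S T) : T.Nonempty := h.2.2.2.2.1

theorem ne_of_mem (h : MaximalSTPair n S T) {s t : Mnn n} (hs : s ∈ S) (ht : t ∈ T) : t ≠ s :=
  fun heq => h.2.2.1.subset ⟨hs, heq ▸ ht⟩

theorem symmGen (h : MaximalSTPair n S T) {s t₁ t₂ : Mnn n} (hs : s ∈ S) (h₁ : t₁ ∈ T)
    (h₂ : t₂ ∈ T) : Comparable s t₁ ∨ Comparable s t₂ ∨ Comparable t₁ t₂ :=
  isSTDistrib_iff_symmGen.1 h.2.2.2.2.2.1 s hs t₁ h₁ t₂ h₂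

theorem mem_left (h : MaximalSTPair n S T) {x : Mnn n} (hx : x ∈ Mnn.star n) (hxT : x ∉ T)
    (hcomp : ∀ t₁ ∈ T, ∀ t₂ ∈ T, Comparable x t₁ ∨ Comparable x t₂ ∨ Comparable t₁ t₂) : x ∈ S := by
  by_contra hxS
  refine h.2.2.2.2.2.2.1 ⟨insert x S, Set.ssubset_insert hxS,
    Set.insert_subset hx h.subset_star_left, ?_, isSTDistrib_iff_symmGen.2 ?_⟩
  · rw [Set.insert_inter_of_notMem hxT, h.2.2.1]
  · rintro s (rfl | hs) t₁ h₁ t₂ h₂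
    exacts [hcomp t₁ h₁ t₂ h₂, h.symmGen hs h₁ h₂]

theorem mem_right (h : MaximalSTPair n S T) {x : Mnn n} (hx : x ∈ Mnn.star n) (hxS : x ∉ S)
    (hcomp : ∀ s ∈ S, ∀ t ∈ T, Comparable s x ∨ Comparable s t ∨ Comparable x t) : x ∈ T := by
  by_contra hxT
  refine h.2.2.2.2.2.2.2 ⟨insert x T, Set.ssubset_insert hxT,
    Set.insert_subset hx h.subset_star_right, ?_, isSTDistrib_iff_symmGen.2 ?_⟩
  · rw [Set.inter_insert_of_notMem hxS, h.2.2.1]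
  · rintro s hs t₁ (rfl | h₁) t₂ (rfl | h₂)
    · exact .inr (.inr .rfl)
    · exact hcomp s hs t₂ h₂
    · rw [or_left_comm, Relation.symmGen_comm (a := t₁)]
      exact hcomp s hs t₁ h₁
    · exact h.symmGen hs h₁ h₂

theorem left_eq_diff_of_isChain (h : MaximalSTPair n S T) (hc : IsChain (· ≤ ·) T) :
    S = Mnn.star n \ T := by
  refine Set.Subset.antisymm
    (fun s hs => ⟨h.subset_star_left hs, fun hsT => h.ne_of_mem hs hsT rfl⟩) ?_
  rintro x ⟨hx, hxT⟩
  exact h.mem_left hx hxT fun t₁ h₁ t₂ h₂ => .inr (.inr (hc.total h₁ h₂))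

theorem typeTChain (h : MaximalSTPair n S T) (hc : IsChain (· ≤ ·) T) : TypeTChain n hn S T :=
  ⟨hc, h.left_eq_diff_of_isChain hc,
    eq_singleton_or_eq_pair_of_isChain h.subset_star_right h.nonempty_right hc⟩

theorem subsingleton_inter_aLevel (h : MaximalSTPair n S T) (hi : a i ∈ S) :
    (T ∩ aLevel n).Subsingleton := by
  rintro _ ⟨hj, j, rfl⟩ _ ⟨hk, k, rfl⟩
  rcases h.symmGen hi hj hk with hij | hik | hjk
  · exact absurd (congrArg a (a_symmGen_a_iff.1 hij).symm) (h.ne_of_mem hi hj)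
  · exact absurd (congrArg a (a_symmGen_a_iff.1 hik).symm) (h.ne_of_mem hi hk)
  · exact congrArg a (a_symmGen_a_iff.1 hjk)

theorem subsingleton_inter_bLevel (h : MaximalSTPair n S T) (hi : b i ∈ S) :
    (T ∩ bLevel n).Subsingleton := by
  rw [← dual_involutive.injective.subsingleton_image_iff,
    Set.image_inter dual_involutive.injective, image_dual_bLevel]
  exact h.image_dual.subsingleton_inter_aLevel (Set.mem_image_of_mem dual hi)

theorem typeS2Links (h : MaximalSTPair n S T) (hc : ¬ IsChain (· ≤ ·) T)
    (hS : S = {aLink n hn, bLink n hn}) : TypeS2Links n hn S T := by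
  have haS : aLink n hn ∈ S := hS ▸ .inl rfl
  have hbS : bLink n hn ∈ S := hS ▸ .inr rfl
  have ha : (T ∩ aLevel n).Subsingleton := h.subsingleton_inter_aLevel haS
  have hb : (T ∩ bLevel n).Subsingleton := h.subsingleton_inter_bLevel hbS
  rcases eq_singleton_or_eq_pair h.subset_star_right h.nonempty_right ha hb with
    ⟨i, rfl⟩ | ⟨j, rfl⟩ | ⟨i, j, rfl⟩
  · exact absurd Set.subsingleton_singleton.isChain hc
  · exact absurd Set.subsingleton_singleton.isChain hc
  · exact ⟨i, j, h.ne_of_mem haS (.inl rfl), h.ne_of_mem hbS (.inr rfl), hS, rfl⟩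

theorem bLevel_subset_right (h : MaximalSTPair n S T) (hS : S = {aLink n hn}) :
    bLevel n ⊆ T := by
  subst hS
  rintro _ ⟨j, rfl⟩
  refine h.mem_right b_mem_star nofun ?_
  rintro _ rfl t -
  exact .inl (.inl aLink_le_b)

theorem exists_a_mem_right (h : MaximalSTPair n S T) (hn1 : 1 < n) (hS : S = {aLink n hn}) :
    ∃ i, a i ∈ T := by
  by_contra! hnot
  have hne : a ⟨0, hn⟩ ≠ aLink n hn := mt a_eq_aLink_iff.1 (Nat.sub_pos_of_lt hn1).ne
  refine hnot ⟨0, hn⟩ (h.mem_right a_mem_star (hS ▸ hne) ?_)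
  rintro s hs t ht
  obtain rfl : s = aLink n hn := hS.subset hs
  rcases star_eq_union ▸ h.subset_star_right ht with ⟨k, rfl⟩ | ⟨k, rfl⟩
  · exact absurd ht (hnot k)
  · exact .inr (.inl (.inl aLink_le_b))

theorem typeSLink_of_left_eq_aLink (h : MaximalSTPair n S T) (hn1 : 1 < n)
    (hS : S = {aLink n hn}) : TypeSLink n hn S T := by
  have haS : aLink n hn ∈ S := hS ▸ rfl
  obtain ⟨i, hi⟩ := h.exists_a_mem_right hn1 hS
  refine .inr ⟨i, h.ne_of_mem haS hi, hS, Set.Subset.antisymm (fun t ht => ?_) ?_⟩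
  · rcases star_eq_union ▸ h.subset_star_right ht with hta | htb
    · exact .inl (h.subsingleton_inter_aLevel haS ⟨ht, hta⟩ ⟨hi, i, rfl⟩)
    · exact .inr htb
  · exact Set.union_subset (Set.singleton_subset_iff.2 hi) (h.bLevel_subset_right hS)

theorem typeSLink_of_left_eq_bLink (h : MaximalSTPair n S T) (hn1 : 1 < n)
    (hS : S = {bLink n hn}) : TypeSLink n hn S T := by
  have hdual : dual '' S = {aLink n hn} := by rw [hS, Set.image_singleton, dual_bLink]
  simpa only [image_dual_image_dual] using
    (h.image_dual.typeSLink_of_left_eq_aLink hn1 hdual).image_dual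

theorem exists_bLink_pair_subset (h : MaximalSTPair n S T) (hc : ¬ IsChain (· ≤ ·) T)
    (hiS : a i ∈ S) (hi : a i ≠ aLink n hn) :
    ∃ k, b k ≠ bLink n hn ∧ {bLink n hn, b k} ⊆ T := by
  obtain ⟨x, hx, y, hy, hxy⟩ : ∃ x ∈ T, ∃ y ∈ T, ¬ Comparable x y := by
    by_contra! hcomp
    exact hc fun x hx y hy _ => hcomp x hx y hy
  wlog hix : Comparable (a i) x generalizing x y
  · exact this y hy x hx (mt .symm hxy)
      (((h.symmGen hiS hx hy).resolve_left hix).resolve_right hxy)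
  obtain rfl : x = bLink n hn :=
    eq_bLink_of_a_symmGen hi (h.subset_star_right hx) (h.ne_of_mem hiS hx) hix
  rcases star_eq_union ▸ h.subset_star_right hy with ⟨k, rfl⟩ | ⟨k, rfl⟩
  · exact absurd (.inr a_le_bLink) hxy
  · exact ⟨k, fun heq => hxy (heq ▸ .rfl), Set.pair_subset hx hy⟩

theorem right_subset_of_a_mem (h : MaximalSTPair n S T) (hiS : a i ∈ S) (hi : a i ≠ aLink n hn)
    (hk : b k ≠ bLink n hn) (hkT : b k ∈ T) : T ⊆ {aLink n hn, bLink n hn, b k} := by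
  intro t ht
  have ht' := h.subset_star_right ht
  rcases h.symmGen hiS ht hkT with hit | hik | htk
  · exact .inr (.inl (eq_bLink_of_a_symmGen hi ht' (h.ne_of_mem hiS ht) hit))
  · exact absurd hik (by simp [a_symmGen_b_iff (hn := hn), hi, hk])
  · by_cases heq : t = b k
    · exact .inr (.inr heq)
    · exact .inl (eq_aLink_of_b_symmGen hk ht' heq htk.symm)

theorem left_eq_aLevel_diff (h : MaximalSTPair n S T) (hk : b k ≠ bLink n hn)
    (hsub : {bLink n hn, b k} ⊆ T) (hsup : T ⊆ {aLink n hn, bLink n hn, b k}) :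
    S = aLevel n \ T := by
  have hbT : bLink n hn ∈ T := hsub (.inl rfl)
  have hkT : b k ∈ T := hsub (.inr rfl)
  refine Set.Subset.antisymm (fun s hs => ⟨?_, fun hsT => h.ne_of_mem hs hsT rfl⟩) ?_
  · rcases star_eq_union ▸ h.subset_star_left hs with hsa | ⟨j, rfl⟩
    · exact hsa
    · have hpair := h.subsingleton_inter_bLevel hs ⟨hkT, k, rfl⟩ ⟨hbT, _, rfl⟩
      exact absurd hpair hk
  · rintro _ ⟨⟨j, rfl⟩, hjT⟩
    refine h.mem_left a_mem_star hjT fun t₁ h₁ t₂ h₂ => ?_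
    rcases hsup h₁ with rfl | rfl | rfl
    · refine .inr (.inr ?_)
      rcases hsup h₂ with rfl | rfl | rfl
      exacts [.rfl, .inl aLink_le_b, .inl aLink_le_b]
    · exact .inl (.inl a_le_bLink)
    · rcases hsup h₂ with rfl | rfl | rfl
      exacts [.inr (.inr (.inr aLink_le_b)), .inr (.inl (.inl a_le_bLink)), .inr (.inr .rfl)]

theorem typeSLevel_or_typeSLevelMinusLink_of_a_mem (h : MaximalSTPair n S T)
    (hc : ¬ IsChain (· ≤ ·) T) (hiS : a i ∈ S) (hi : a i ≠ aLink n hn) :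
    TypeSLevel n hn S T ∨ TypeSLevelMinusLink n hn S T := by
  obtain ⟨k, hk, hsub⟩ := h.exists_bLink_pair_subset hc hiS hi
  have hsup := h.right_subset_of_a_mem hiS hi hk (hsub (.inr rfl))
  have hS := h.left_eq_aLevel_diff hk hsub hsup
  by_cases haT : aLink n hn ∈ T
  · have hT : T = {aLink n hn, bLink n hn, b k} := hsup.antisymm (Set.insert_subset haT hsub)
    refine .inr (.inr ⟨k, hk, ?_, hT⟩)
    rw [hS, hT]
    ext x
    cases x <;> simp [aLevel, bLink]
  · have hT : T = {bLink n hn, b k} :=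
      ((Set.subset_insert_iff_of_notMem haT).1 hsup).antisymm hsub
    refine .inl (.inr ⟨k, hk, ?_, hT⟩)
    rw [hS, hT]
    ext x
    cases x <;> simp [aLevel, bLink]

theorem typeSLevel_or_typeSLevelMinusLink_of_b_mem (h : MaximalSTPair n S T)
    (hc : ¬ IsChain (· ≤ ·) T) (hiS : b i ∈ S) (hi : b i ≠ bLink n hn) :
    TypeSLevel n hn S T ∨ TypeSLevelMinusLink n hn S T := by
  have hi' : dual (b i) ≠ aLink n hn :=
    fun heq => hi (dual_involutive.injective (heq.trans dual_bLink.symm))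
  have hdual := h.image_dual.typeSLevel_or_typeSLevelMinusLink_of_a_mem
    (mt isChain_image_dual_iff.1 hc) (Set.mem_image_of_mem dual hiS) hi'
  simpa only [image_dual_image_dual] using
    hdual.imp TypeSLevel.image_dual TypeSLevelMinusLink.image_dual

end MaximalSTPair

end

/-- Characterization of maximal `ST`-pairs of `M_{n,n}`: every maximal
`ST`-pair has one of the five forms T-chain, S-link, S-2-links, S-level,
S-level-minus-link. -/
theorem characterization_of_maximal_ST_pairs (n : ℕ) (hn : 3 ≤ n)
    (S T : Set (Mnn n)) (h : MaximalSTPair n S T) :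
    TypeTChain n (by omega) S T ∨ TypeSLink n (by omega) S T ∨
    TypeS2Links n (by omega) S T ∨ TypeSLevel n (by omega) S T ∨
    TypeSLevelMinusLink n (by omega) S T := by
  have hn0 : 0 < n := by omega
  by_cases hc : IsChain (· ≤ ·) T
  · exact .inl (h.typeTChain hc)
  by_cases hS : S ⊆ {Mnn.aLink n hn0, Mnn.bLink n hn0}
  · rcases Set.subset_pair_iff_eq.1 hS with hS | hS | hS | hS
    · exact absurd hS h.nonempty_left.ne_empty
    · exact .inr (.inl (h.typeSLink_of_left_eq_aLink (by omega) hS))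
    · exact .inr (.inl (h.typeSLink_of_left_eq_bLink (by omega) hS))
    · exact .inr (.inr (.inl (h.typeS2Links hc hS)))
  · obtain ⟨s, hs, hlink⟩ := Set.not_subset.1 hS
    refine .inr (.inr (.inr ?_))
    rcases Mnn.star_eq_union ▸ h.subset_star_left hs with ⟨i, rfl⟩ | ⟨i, rfl⟩
    · exact h.typeSLevel_or_typeSLevelMinusLink_of_a_mem hc hs (mt .inl hlink)
    · exact h.typeSLevel_or_typeSLevelMinusLink_of_b_mem hc hs (mt .inr hlink)
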